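/- Let k ≥ 1 and let M be a (2^k)×(2^k) complex matrix. Then there exists a finite list U_1, …, U_s of (2^k)×(2^k) unitary matrices with s ≤ k · 2^(k−1), each of which agrees with the identity matrix outside the rows and columns indexed by some two-element set of indices, such that their product U = U_s * ⋯ * U_1 satisfies: every diagonal entry of U * M * Uᴴ equals (trace M) / 2^k. -/

import Mathlib

open scoped Matrix

/-!
Conjugate a `2 × 2` matrix by a diagonal phase and then by the rotation through the angle `t`. The
two diagonal entries of the result differ by `cos 2t * δ + sin 2t * β`, where `δ` is the difference
of the original diagonal entries and `β` combines the off-diagonal entries and the phase. A suitable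
phase makes `β` collinear with `δ` over `ℝ`, and then the difference vanishes for some `t`. Hence
conjugation by a two-level unitary can replace any two diagonal entries of a matrix by their mean
while keeping the others.

It remains to make a function on `2 ^ k` points constant by averaging pairs of values: treat the two
halves recursively, then average each point of one half with a point of the other. The number of
averages satisfies `T (k + 1) = 2 * T k + 2 ^ k`, so `T k = k * 2 ^ (k - 1)`.
-/

namespace Equidiagonalization

section AveragePair

variable {ι K : Type*} [DecidableEq ι] [DivisionRing K]

/-- The function obtained from `f` by replacing its values at the two entries of `p` by their
mean. -/
def averagePair (p : ι × ι) (f : ι → K) : ι → K := fun x =>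
  if x = p.1 ∨ x = p.2 then (f p.1 + f p.2) / 2 else f x

lemma foldr_averagePair_of_forall_ne {l : List (ι × ι)} {x : ι}
    (hx : ∀ p ∈ l, x ≠ p.1 ∧ x ≠ p.2) (f : ι → K) : l.foldr averagePair f x = f x := by
  induction l with
  | nil => rfl
  | cons p l ih =>
    obtain ⟨hp, hl⟩ := List.forall_mem_cons.1 hx
    simp only [List.foldr_cons, averagePair, hp.1, hp.2, or_self, if_false, ih hl]

lemma foldr_averagePair_of_notMem {S : Finset ι} {l : List (ι × ι)}
    (hl : ∀ p ∈ l, p ∈ S.offDiag) {x : ι} (hx : x ∉ S) (f : ι → K) :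
    l.foldr averagePair f x = f x :=
  foldr_averagePair_of_forall_ne (fun p hp => by
    have hpS := Finset.mem_offDiag.1 (hl p hp)
    exact ⟨fun h => hx (h ▸ hpS.1), fun h => hx (h ▸ hpS.2.1)⟩) f

variable (K) in
lemma exists_list_foldr_averagePair_of_disjoint {S T : Finset ι} (hST : Disjoint S T)
    (hcard : S.card = T.card) :
    ∃ l : List (ι × ι), l.length = S.card ∧ (∀ p ∈ l, p ∈ S ×ˢ T) ∧
      ∀ (f : ι → K) (a b : K), (∀ x ∈ S, f x = a) → (∀ x ∈ T, f x = b) →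
        ∀ x ∈ S ∪ T, l.foldr averagePair f x = (a + b) / 2 := by
  induction S using Finset.induction generalizing T with
  | empty =>
    obtain rfl : T = ∅ := by simpa [eq_comm] using hcard
    exact ⟨[], by simp⟩
  | insert i S hiS ih =>
    rw [Finset.card_insert_of_notMem hiS] at hcard
    obtain ⟨j, T, hjT, rfl, hT⟩ := Finset.card_eq_succ.1 hcard.symm
    simp only [Finset.disjoint_insert_left, Finset.disjoint_insert_right, Finset.mem_insert,
      not_or] at hST
    obtain ⟨⟨_, hjS⟩, hiT, hST⟩ := hST
    obtain ⟨l, hlen, hl, havg⟩ := ih hST hT.symm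
    refine ⟨(i, j) :: l, by simp [hlen, hiS], ?_, fun f a b hfS hfT x hx => ?_⟩
    · grind
    · have hunchanged : ∀ y ∉ S ∪ T, l.foldr averagePair f y = f y := fun y hy =>
        foldr_averagePair_of_forall_ne (by grind) f
      have hi : l.foldr averagePair f i = a := by grind
      have hj : l.foldr averagePair f j = b := by grind
      have hrest : ∀ y ∈ S ∪ T, l.foldr averagePair f y = (a + b) / 2 :=
        havg f a b (by grind) (by grind)
      simp only [List.foldr_cons, averagePair, hi, hj]
      grind

variable (K) in
theorem exists_list_foldr_averagePair_eq_mean (k : ℕ) {S : Finset ι} (hS : S.card = 2 ^ k) :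
    ∃ l : List (ι × ι), l.length = k * 2 ^ (k - 1) ∧ (∀ p ∈ l, p ∈ S.offDiag) ∧
      ∀ f : ι → K, ∀ x ∈ S, l.foldr averagePair f x = (∑ y ∈ S, f y) / 2 ^ k := by
  induction k generalizing S with
  | zero =>
    obtain ⟨i, rfl⟩ := Finset.card_eq_one.1 hS
    exact ⟨[], by simp⟩
  | succ k ih =>
    obtain ⟨A, B, hA, hB, hAB, rfl⟩ : ∃ A B : Finset ι, A.card = 2 ^ k ∧ B.card = 2 ^ k ∧
        Disjoint A B ∧ A ∪ B = S := by
      obtain ⟨A, hAS, hA⟩ := Finset.exists_subset_card_eq (s := S) (n := 2 ^ k) (by grind)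
      exact ⟨A, S \ A, hA, by grind, Finset.disjoint_sdiff, Finset.union_sdiff_of_subset hAS⟩
    obtain ⟨lA, hlenA, hlA, hmeanA⟩ := ih hA
    obtain ⟨lB, hlenB, hlB, hmeanB⟩ := ih hB
    obtain ⟨l, hlen, hl, hmean⟩ :=
      exists_list_foldr_averagePair_of_disjoint K hAB (hA.trans hB.symm)
    refine ⟨l ++ (lB ++ lA), ?_, ?_, fun f x hx => ?_⟩
    · have hrec : 2 ^ k + (k * 2 ^ (k - 1) + k * 2 ^ (k - 1)) = (k + 1) * 2 ^ k := by
        cases k <;> grind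
      simpa [hlen, hA, hlenA, hlenB] using hrec
    · have hne : ∀ x ∈ A, ∀ y ∈ B, x ≠ y := fun x hx y hy => Finset.disjoint_iff_ne.1 hAB x hx y hy
      grind
    · have hvalA : ∀ y ∈ A, (lB ++ lA).foldr averagePair f y = (∑ z ∈ A, f z) / 2 ^ k := by
        intro y hy
        rw [List.foldr_append,
          foldr_averagePair_of_notMem hlB (Finset.disjoint_left.1 hAB hy), hmeanA f y hy]
      have hvalB : ∀ y ∈ B, (lB ++ lA).foldr averagePair f y = (∑ z ∈ B, f z) / 2 ^ k := by
        intro y hy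
        rw [List.foldr_append, hmeanB _ y hy, Finset.sum_congr rfl fun z hz =>
          foldr_averagePair_of_notMem hlA (Finset.disjoint_right.1 hAB hz) f]
      rw [List.foldr_append, hmean _ _ _ hvalA hvalB x hx, Finset.sum_union hAB, ← add_div,
        pow_succ', div_mul_eq_div_div_swap]

end AveragePair

section ExtendByOne

variable {m n o o' R : Type*} [Fintype m] [DecidableEq m] [DecidableEq n]

/-- The matrix that acts as `W` on the coordinates in the range of `f` and as the identity on the
others. For injective `f`, the factor `(1 : Matrix n n R).submatrix id f` is the isometry that
includes the coordinate space of `m` into that of `n` along `f`. -/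
def extendByOne [Ring R] (f : m → n) (W : Matrix m m R) : Matrix n n R :=
  1 + (1 : Matrix n n R).submatrix id f * (W - 1) * (1 : Matrix n n R).submatrix f id

section Ring

variable [Ring R] {f : m → n} {p q : n}

lemma extendByOne_one (f : m → n) : extendByOne f (1 : Matrix m m R) = 1 := by
  simp [extendByOne]

lemma extendByOne_apply_of_notMem_range (h : p ∉ Set.range f ∨ q ∉ Set.range f)
    (W : Matrix m m R) : extendByOne f W p q = (1 : Matrix n n R) p q := by
  rw [extendByOne, Matrix.add_apply, add_eq_left]
  rcases h with hp | hq
  · have hrow : ∀ i, (1 : Matrix n n R).submatrix id f p i = 0 := fun i =>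
      Matrix.one_apply_ne fun h => hp ⟨i, h.symm⟩
    rw [Matrix.mul_assoc, Matrix.mul_apply]
    simp only [hrow, zero_mul, Finset.sum_const_zero]
  · have hcol : ∀ i, (1 : Matrix n n R).submatrix f id i q = 0 := fun i =>
      Matrix.one_apply_ne fun h => hq ⟨i, h⟩
    rw [Matrix.mul_apply]
    simp only [hcol, mul_zero, Finset.sum_const_zero]

variable [Fintype n]

lemma extendByOne_mul_apply_of_notMem_range (hp : p ∉ Set.range f) (W : Matrix m m R)
    (A : Matrix n o R) (k : o) : (extendByOne f W * A) p k = A p k := by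
  simp only [Matrix.mul_apply, extendByOne_apply_of_notMem_range (.inl hp)]
  rw [← Matrix.mul_apply, Matrix.one_mul]

lemma extendByOne_mul_extendByOne (hf : f.Injective) (V W : Matrix m m R) :
    extendByOne f V * extendByOne f W = extendByOne f (V * W) := by
  have hisometry : (1 : Matrix n n R).submatrix f id * (1 : Matrix n n R).submatrix id f = 1 := by
    rw [← Matrix.submatrix_mul _ _ _ _ _ Function.bijective_id, Matrix.one_mul,
      Matrix.submatrix_one f hf]
  simp only [extendByOne]
  set E := (1 : Matrix n n R).submatrix id f
  set F := (1 : Matrix n n R).submatrix f id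
  calc (1 + E * (V - 1) * F) * (1 + E * (W - 1) * F)
      = 1 + E * (V - 1) * F + E * (W - 1) * F + E * (V - 1) * (F * E) * (W - 1) * F := by
        simp only [Matrix.mul_add, Matrix.add_mul, Matrix.one_mul, Matrix.mul_one,
          Matrix.mul_assoc, add_assoc]
    _ = 1 + E * ((V - 1) + (W - 1) + (V - 1) * (W - 1)) * F := by
        simp only [hisometry, Matrix.mul_add, Matrix.add_mul, Matrix.mul_one, Matrix.mul_assoc,
          add_assoc]
    _ = 1 + E * (V * W - 1) * F := by
        congr 3
        noncomm_ring

lemma submatrix_extendByOne_mul (hf : f.Injective) (W : Matrix m m R) (A : Matrix n o R)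
    (g : o' → o) : (extendByOne f W * A).submatrix f g = W * A.submatrix f g := by
  have hsub : (extendByOne f W).submatrix f id = W * (1 : Matrix n n R).submatrix f id := by
    simp [extendByOne, Matrix.submatrix_add, Matrix.submatrix_mul _ _ _ _ _ Function.bijective_id,
      Matrix.submatrix_one f hf, Matrix.sub_mul]
  rw [Matrix.submatrix_mul _ _ _ _ _ Function.bijective_id, hsub, Matrix.mul_assoc,
    ← Matrix.submatrix_mul _ _ _ _ _ Function.bijective_id, Matrix.one_mul]

end Ring

lemma conjTranspose_extendByOne [Ring R] [StarRing R] (f : m → n) (W : Matrix m m R) :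
    (extendByOne f W)ᴴ = extendByOne f Wᴴ := by
  simp [extendByOne, Matrix.mul_assoc, Matrix.conjTranspose_submatrix]

variable [Fintype n]

lemma extendByOne_mem_unitaryGroup [CommRing R] [StarRing R] {f : m → n} (hf : f.Injective)
    {W : Matrix m m R} (hW : W ∈ Matrix.unitaryGroup m R) :
    extendByOne f W ∈ Matrix.unitaryGroup n R := by
  rw [Matrix.mem_unitaryGroup_iff, Matrix.star_eq_conjTranspose] at hW ⊢
  rw [conjTranspose_extendByOne, extendByOne_mul_extendByOne hf, hW, extendByOne_one]

lemma submatrix_extendByOne_conj [Ring R] [StarRing R] {f : m → n} (hf : f.Injective)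
    (W : Matrix m m R) (A : Matrix n n R) :
    (extendByOne f W * A * (extendByOne f W)ᴴ).submatrix f f = W * A.submatrix f f * Wᴴ := by
  have hright : (A * (extendByOne f W)ᴴ).submatrix f f = A.submatrix f f * Wᴴ := by
    apply Matrix.conjTranspose_injective
    simp [Matrix.conjTranspose_submatrix, submatrix_extendByOne_mul hf]
  rw [Matrix.mul_assoc, submatrix_extendByOne_mul hf, hright, Matrix.mul_assoc]

lemma extendByOne_conj_apply_self_of_notMem_range [Ring R] [StarRing R] {f : m → n} {p : n}
    (hp : p ∉ Set.range f) (W : Matrix m m R) (A : Matrix n n R) :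
    (extendByOne f W * A * (extendByOne f W)ᴴ) p p = A p p := by
  rw [Matrix.mul_assoc, extendByOne_mul_apply_of_notMem_range hp, ← star_inj,
    ← Matrix.conjTranspose_apply, Matrix.conjTranspose_mul, Matrix.conjTranspose_conjTranspose,
    extendByOne_mul_apply_of_notMem_range hp, Matrix.conjTranspose_apply]

end ExtendByOne

section TwoByTwo

variable {𝕜 : Type*} [RCLike 𝕜]

lemma exists_cos_mul_add_sin_mul_eq_zero {δ β : 𝕜} (h : RCLike.im (star δ * β) = 0) :
    ∃ t : ℝ, (Real.cos t : 𝕜) * δ + (Real.sin t : 𝕜) * β = 0 := by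
  rcases eq_or_ne δ 0 with rfl | hδ
  · exact ⟨0, by simp⟩
  obtain ⟨t, ht⟩ : (0 : ℝ) ∈ Set.range fun t : ℝ =>
      Real.cos t * ‖δ‖ ^ 2 + Real.sin t * RCLike.re (star δ * β) :=
    mem_range_of_exists_le_of_exists_ge (by fun_prop) ⟨Real.pi, by simp⟩ ⟨0, by simp⟩
  have hβ : ((RCLike.re (star δ * β) : ℝ) : 𝕜) = star δ * β :=
    RCLike.conj_eq_iff_re.1 (RCLike.conj_eq_iff_im.2 h)
  have hδ_sq : star δ * δ = ((‖δ‖ ^ 2 : ℝ) : 𝕜) := by simpa using RCLike.conj_mul δ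
  refine ⟨t, (mul_eq_zero.1 ?_).resolve_left (star_ne_zero.2 hδ)⟩
  calc star δ * (Real.cos t * δ + Real.sin t * β)
      = Real.cos t * (star δ * δ) + Real.sin t * (star δ * β) := by ring
    _ = 0 := by rw [hδ_sq, ← hβ]; exact_mod_cast ht

lemma exists_norm_eq_one_im_star_mul_eq_zero (δ b c : 𝕜) :
    ∃ w : 𝕜, ‖w‖ = 1 ∧ RCLike.im (star δ * (star w * b + w * c)) = 0 := by
  obtain ⟨w, hw, hnorm⟩ := RCLike.exists_norm_eq_mul_self (star δ * c - δ * star b)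
  refine ⟨w, hw, ?_⟩
  have hmul_im : RCLike.im (w * (star δ * c - δ * star b)) = 0 := by
    rw [← hnorm, RCLike.ofReal_im]
  rw [← hmul_im]
  simp only [RCLike.star_def, RCLike.mul_im, RCLike.mul_re, RCLike.conj_re, RCLike.conj_im, map_add,
    map_sub]
  ring

/-- The rotation `!![cos t, sin t; -sin t, cos t]` conjugated, for `‖w‖ = 1`, by the diagonal
unitary with entries `1` and `star w`. Conjugation by such matrices equalizes the diagonal of a
`2 × 2` matrix. -/
noncomputable def phasedRotation (t : ℝ) (w : 𝕜) : Matrix (Fin 2) (Fin 2) 𝕜 :=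
  !![(Real.cos t : 𝕜), Real.sin t * w; -(Real.sin t * star w), (Real.cos t : 𝕜)]

lemma conjTranspose_phasedRotation (t : ℝ) (w : 𝕜) :
    (phasedRotation t w)ᴴ = phasedRotation (-t) w := by
  ext i j
  fin_cases i <;> fin_cases j <;> simp [phasedRotation]

lemma phasedRotation_mem_unitaryGroup (t : ℝ) {w : 𝕜} (hw : ‖w‖ = 1) :
    phasedRotation t w ∈ Matrix.unitaryGroup (Fin 2) 𝕜 := by
  have hw' : w * star w = 1 := by simp [RCLike.mul_conj, hw]
  have ht : (Real.cos t : 𝕜) ^ 2 + (Real.sin t : 𝕜) ^ 2 = 1 := by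
    exact_mod_cast Real.cos_sq_add_sin_sq t
  rw [Matrix.mem_unitaryGroup_iff, Matrix.star_eq_conjTranspose, conjTranspose_phasedRotation,
    phasedRotation, phasedRotation, Matrix.mul_fin_two, Matrix.one_fin_two, Real.cos_neg,
    Real.sin_neg, RCLike.ofReal_neg]
  congr! <;> grind

lemma two_mul_phasedRotation_conj_apply_zero_zero (t : ℝ) {w : 𝕜} (hw : ‖w‖ = 1)
    (A : Matrix (Fin 2) (Fin 2) 𝕜) :
    2 * (phasedRotation t w * A * (phasedRotation t w)ᴴ) 0 0 =
      A.trace + ((Real.cos (2 * t) : 𝕜) * (A 0 0 - A 1 1) +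
        (Real.sin (2 * t) : 𝕜) * (star w * A 0 1 + w * A 1 0)) := by
  have hw' : w * star w = 1 := by simp [RCLike.mul_conj, hw]
  have ht : (Real.cos t : 𝕜) ^ 2 + (Real.sin t : 𝕜) ^ 2 = 1 := by
    exact_mod_cast Real.cos_sq_add_sin_sq t
  have hentry : (phasedRotation t w * A * (phasedRotation t w)ᴴ) 0 0 =
      (Real.cos t * A 0 0 + Real.sin t * w * A 1 0) * Real.cos t +
        (Real.cos t * A 0 1 + Real.sin t * w * A 1 1) * (Real.sin t * star w) := by
    rw [conjTranspose_phasedRotation, Matrix.eta_fin_two A]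
    simp [phasedRotation, RCLike.real_smul_eq_coe_mul]
  rw [hentry, Matrix.trace_fin_two, Real.cos_two_mul', Real.sin_two_mul]
  push_cast
  linear_combination (A 0 0 + A 1 1) * ht + 2 * (Real.sin t : 𝕜) ^ 2 * A 1 1 * hw'

theorem exists_unitary_diag_conj_eq_trace_div_two (A : Matrix (Fin 2) (Fin 2) 𝕜) :
    ∃ W ∈ Matrix.unitaryGroup (Fin 2) 𝕜, ∀ i, (W * A * Wᴴ) i i = A.trace / 2 := by
  obtain ⟨w, hw, him⟩ := exists_norm_eq_one_im_star_mul_eq_zero (A 0 0 - A 1 1) (A 0 1) (A 1 0)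
  obtain ⟨t, ht⟩ := exists_cos_mul_add_sin_mul_eq_zero him
  set W := phasedRotation (t / 2) w
  have hW : W ∈ Matrix.unitaryGroup (Fin 2) 𝕜 := phasedRotation_mem_unitaryGroup (t / 2) hw
  have hzero : 2 * (W * A * Wᴴ) 0 0 = A.trace := by
    rw [two_mul_phasedRotation_conj_apply_zero_zero (t / 2) hw, mul_div_cancel₀ t two_ne_zero, ht,
      add_zero]
  have htrace : (W * A * Wᴴ) 0 0 + (W * A * Wᴴ) 1 1 = A.trace := by
    rw [← Matrix.trace_fin_two, Matrix.trace_mul_cycle, ← Matrix.star_eq_conjTranspose,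
      Matrix.mem_unitaryGroup_iff'.1 hW, Matrix.one_mul]
  refine ⟨W, hW, Fin.forall_fin_two.2 ⟨?_, ?_⟩⟩
  · linear_combination hzero / 2
  · linear_combination htrace - hzero / 2

end TwoByTwo

section TwoLevelUnitary

variable {ι R : Type*} [Fintype ι] [DecidableEq ι]

/-- A unitary matrix agreeing with the identity outside the rows and columns indexed by some
two-element set. -/
def IsTwoLevelUnitary [CommRing R] [StarRing R] (V : Matrix ι ι R) : Prop :=
  V ∈ Matrix.unitaryGroup ι R ∧
    ∃ i j : ι, i ≠ j ∧ ∀ p q : ι, p ∉ ({i, j} : Set ι) ∨ q ∉ ({i, j} : Set ι) →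
      V p q = (1 : Matrix ι ι R) p q

lemma isTwoLevelUnitary_extendByOne [CommRing R] [StarRing R] {i j : ι} (hij : i ≠ j)
    {W : Matrix (Fin 2) (Fin 2) R} (hW : W ∈ Matrix.unitaryGroup (Fin 2) R) :
    IsTwoLevelUnitary (extendByOne ![i, j] W) := by
  refine ⟨extendByOne_mem_unitaryGroup (injective_pair_iff_ne.2 hij) hW, i, j, hij, fun p q h => ?_⟩
  rw [← Matrix.range_cons_cons_empty i j ![]] at h
  exact extendByOne_apply_of_notMem_range h W

variable {𝕜 : Type*} [RCLike 𝕜]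

theorem exists_isTwoLevelUnitary_diag_conj_eq_averagePair (M : Matrix ι ι 𝕜) {p : ι × ι}
    (hp : p.1 ≠ p.2) :
    ∃ V, IsTwoLevelUnitary V ∧ (V * M * Vᴴ).diag = averagePair p M.diag := by
  obtain ⟨W, hW, hdiag⟩ :=
    exists_unitary_diag_conj_eq_trace_div_two (M.submatrix ![p.1, p.2] ![p.1, p.2])
  refine ⟨extendByOne ![p.1, p.2] W, isTwoLevelUnitary_extendByOne hp hW, funext fun x => ?_⟩
  by_cases hx : x ∈ Set.range ![p.1, p.2]
  · obtain ⟨i, rfl⟩ := hx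
    have hmean : averagePair p M.diag (![p.1, p.2] i) = (M p.1 p.1 + M p.2 p.2) / 2 := by
      fin_cases i <;> simp [averagePair]
    have hconj := congrFun₂ (submatrix_extendByOne_conj (injective_pair_iff_ne.2 hp) W M) i i
    rw [hmean]
    exact hconj.trans ((hdiag i).trans (by rw [Matrix.trace_fin_two]; rfl))
  · rw [Matrix.diag_apply, extendByOne_conj_apply_self_of_notMem_range hx, averagePair, if_neg,
      Matrix.diag_apply]
    simpa [and_comm] using hx

theorem exists_list_isTwoLevelUnitary_diag_conj_eq_foldr_averagePair (M : Matrix ι ι 𝕜)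
    {l : List (ι × ι)} (hl : ∀ p ∈ l, p.1 ≠ p.2) :
    ∃ L : List (Matrix ι ι 𝕜), L.length = l.length ∧ (∀ V ∈ L, IsTwoLevelUnitary V) ∧
      (L.prod * M * L.prodᴴ).diag = l.foldr averagePair M.diag := by
  induction l with
  | nil => exact ⟨[], by simp⟩
  | cons p l ih =>
    obtain ⟨hp, hl⟩ := List.forall_mem_cons.1 hl
    obtain ⟨L, hlen, hL, hdiag⟩ := ih hl
    obtain ⟨V, hV, hVdiag⟩ :=
      exists_isTwoLevelUnitary_diag_conj_eq_averagePair (L.prod * M * L.prodᴴ) hp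
    refine ⟨V :: L, by simp [hlen], List.forall_mem_cons.2 ⟨hV, hL⟩, ?_⟩
    rw [List.foldr_cons, ← hdiag, ← hVdiag]
    simp only [List.prod_cons, Matrix.conjTranspose_mul, Matrix.mul_assoc]

end TwoLevelUnitary

end Equidiagonalization

open Equidiagonalization in
theorem exists_twoLevel_list_equidiagonalize_pow_two_general {ι 𝕜 : Type*} [Fintype ι]
    [DecidableEq ι] [RCLike 𝕜] (k : ℕ) (hι : Fintype.card ι = 2 ^ k) (M : Matrix ι ι 𝕜) :
    ∃ L : List (Matrix ι ι 𝕜), L.length = k * 2 ^ (k - 1) ∧ (∀ V ∈ L, IsTwoLevelUnitary V) ∧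
      ∀ d, (L.prod * M * L.prodᴴ) d d = M.trace / 2 ^ k := by
  obtain ⟨l, hlen, hl, hmean⟩ := exists_list_foldr_averagePair_eq_mean 𝕜 k (S := Finset.univ) hι
  obtain ⟨L, hLlen, hL, hdiag⟩ := exists_list_isTwoLevelUnitary_diag_conj_eq_foldr_averagePair M
    fun p hp => (Finset.mem_offDiag.1 (hl p hp)).2.2
  exact ⟨L, hLlen.trans hlen, hL, fun d =>
    (congrFun hdiag d).trans (hmean M.diag d (Finset.mem_univ d))⟩

/-- Quantitative equidiagonalization: a `2^k × 2^k` complex matrix can be equidiagonalized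
by a product `U = U_s * ⋯ * U_1` of at most `k·2^(k−1)` two-level unitaries, i.e.
unitaries agreeing with the identity outside the rows and columns indexed by some
two-element set `{i, j}` of indices. -/
theorem exists_twoLevel_list_equidiagonalize_pow_two (k : ℕ) (hk : 1 ≤ k)
    (M : Matrix (Fin (2 ^ k)) (Fin (2 ^ k)) ℂ) :
    ∃ L : List (Matrix (Fin (2 ^ k)) (Fin (2 ^ k)) ℂ),
      L.length ≤ k * 2 ^ (k - 1) ∧
      (∀ V ∈ L, V ∈ Matrix.unitaryGroup (Fin (2 ^ k)) ℂ ∧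
        ∃ i j : Fin (2 ^ k), i ≠ j ∧
          ∀ p q : Fin (2 ^ k),
            p ∉ ({i, j} : Set (Fin (2 ^ k))) ∨ q ∉ ({i, j} : Set (Fin (2 ^ k))) →
              V p q = (1 : Matrix (Fin (2 ^ k)) (Fin (2 ^ k)) ℂ) p q) ∧
      (∀ d : Fin (2 ^ k),
        (L.prod * M * L.prodᴴ) d d = M.trace / (2 ^ k : ℂ)) := by
  obtain ⟨L, hlen, hL⟩ :=
    exists_twoLevel_list_equidiagonalize_pow_two_general k (Fintype.card_fin _) M
  exact ⟨L, hlen.le, hL⟩
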